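/- On the event E, under Condition (H), for every iteration t ≤ T, every filter r ∈ [m], and every noise patch (i,j) with i ∈ [N], j ≠ s(X_i), the noise coefficient is uniformly bounded: ρ_{i,j,r}^{(t)} ≤ 10·(log T)^{1/3}/(σ_n² d). -/

import Mathlib

open Finset MeasureTheory ProbabilityTheory
open scoped ENNReal NNReal

noncomputable section

namespace AD

/-- Cubic ReLU activation. -/
def phi (z : ℝ) : ℝ := (max 0 z) ^ 3

/-- Negative sigmoid `ψ(z) = 1/(1+e^z)`. -/
def psi (z : ℝ) : ℝ := 1 / (1 + Real.exp z)

/-- Logistic loss `ℓ(z) = log(1+e^{-z})`. -/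
def lloss (z : ℝ) : ℝ := Real.log (1 + Real.exp (-z))

/-- Logistic sigmoid `σ(z) = 1/(1+e^{-z})`. -/
def sigm (z : ℝ) : ℝ := 1 / (1 + Real.exp (-z))

/-- Euclidean inner product on `Fin d → ℝ`. -/
def dot {d : ℕ} (a b : Fin d → ℝ) : ℝ := ∑ k, a k * b k

/-- Squared Euclidean norm. -/
def sqnorm {d : ℕ} (a : Fin d → ℝ) : ℝ := dot a a

/-- First standard basis vector `e₁` (the learnable feature `u`). -/
def e1 (d : ℕ) (hd : 0 < d) : Fin d → ℝ := fun k => if k = (⟨0, hd⟩ : Fin d) then 1 else 0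

/-- Last standard basis vector `e_d` (the unlearnable feature `v`). -/
def eLast (d : ℕ) (_hd : 0 < d) : Fin d → ℝ := fun k => if (k : ℕ) = d - 1 then 1 else 0

/-- The two-layer student network
`f_W(X) = ∑_r ∑_p [φ(⟨w_r,x_p⟩) − φ(−⟨w_r,x_p⟩)]`. -/
def netOut {m P d : ℕ} (w : Fin m → Fin d → ℝ) (X : Fin P → Fin d → ℝ) : ℝ :=
  ∑ r, ∑ p, (phi (dot (w r) (X p)) - phi (-(dot (w r) (X p))))

/-- The concentration event `E` of the paper, i.e. properties (P1)–(P8), stated for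
training patches `x`, initialization `w0`, labels `y` and signal-patch indices `sig`. -/
def EventEOn (N m P d : ℕ) (hd : 0 < d) (sigman sigma0 delta : ℝ)
    (y : Fin N → ℝ) (sig : Fin N → Fin P)
    (x : Fin N → Fin P → Fin d → ℝ) (w0 : Fin m → Fin d → ℝ) : Prop :=
  -- (P1) noise-patch norms
  (∀ i j, j ≠ sig i →
      sigman ^ 2 * d / 2 ≤ sqnorm (x i j) ∧ sqnorm (x i j) ≤ 3 * sigman ^ 2 * d / 2) ∧
  -- (P2) pairwise noise inner products
  (∀ i k j q, j ≠ sig i → q ≠ sig k → ((i, j) : Fin N × Fin P) ≠ (k, q) →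
      |dot (x i j) (x k q)| ≤
        2 * sigman ^ 2 * Real.sqrt ((d : ℝ) * Real.log ((16 : ℝ) * N ^ 2 * P ^ 2 / delta))) ∧
  -- (P3) sup-norm of noise patches
  (∀ i j, j ≠ sig i → ∀ kk : Fin d,
      |x i j kk| ≤ sigman * Real.sqrt (2 * Real.log ((16 : ℝ) * d * N * P / delta))) ∧
  -- (P4) initialization norms
  (∀ r, Real.sqrt (sqnorm (w0 r)) ≤ 2 * sigma0 * Real.sqrt d) ∧
  -- (P5) initialization signal correlation
  (∀ r, |dot (w0 r) (e1 d hd)| ≤ sigma0 * Real.sqrt (2 * Real.log ((16 : ℝ) * m / delta))) ∧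
  -- (P6) initialization noise correlations
  (∀ r i j, j ≠ sig i →
      |dot (w0 r) (x i j)| ≤
        2 * sigma0 * sigman * Real.sqrt ((d : ℝ) * Real.log ((16 : ℝ) * N * m * P / delta))) ∧
  -- (P7) maximal initial signal alignment
  (∃ r, sigma0 / 2 ≤ dot (w0 r) (e1 d hd)) ∧
  -- (P8) maximal initial noise alignment
  (∀ i j, j ≠ sig i → ∃ r, sigma0 * sigman * Real.sqrt d / 4 ≤ y i * dot (w0 r) (x i j))
structure Setting where
  N : ℕ
  m : ℕ
  P : ℕ
  d : ℕ
  T : ℕ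
  hN : 0 < N
  hm : 0 < m
  hP : 0 < P
  hd : 0 < d
  alpha : ℝ
  sigman : ℝ
  sigma0 : ℝ
  eta : ℝ
  eps : ℝ
  delta : ℝ
  halpha : 0 < alpha
  hsigman : 0 < sigman
  hsigma0 : 0 < sigma0
  heta : 0 < eta
  heps : 0 < eps
  hepsalpha : eps < alpha
  hdelta0 : 0 < delta
  hdelta1 : delta < 1
  /-- labels -/
  y : Fin N → ℝ
  hy : ∀ i, y i = 1 ∨ y i = -1
  /-- signal patch index -/
  sig : Fin N → Fin P
  /-- learnable samples -/
  SL : Finset (Fin N)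
  /-- unlearnable samples -/
  SU : Finset (Fin N)
  hunion : SL ∪ SU = Finset.univ
  hdisj : Disjoint SL SU
  /-- training patches -/
  x : Fin N → Fin P → Fin d → ℝ
  hsigL : ∀ i ∈ SL, x i (sig i) = (alpha * y i) • e1 d hd
  hsigU : ∀ i ∈ SU, x i (sig i) = (alpha * y i) • eLast d hd
  hnoiseU : ∀ i j, j ≠ sig i → dot (x i j) (e1 d hd) = 0
  hnoiseV : ∀ i j, j ≠ sig i → dot (x i j) (eLast d hd) = 0
  /-- weight trajectory -/
  w : ℕ → Fin m → Fin d → ℝ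
  hwperp : ∀ t r, dot (w t r) (eLast d hd) = 0
  /-- adversarial training examples at each iteration -/
  xadv : ℕ → Fin N → Fin P → Fin d → ℝ
  hadvnoise : ∀ t i j, j ≠ sig i → xadv t i j = x i j
  hadvspan : ∀ t i, ∃ c : ℝ, xadv t i (sig i) - x i (sig i) = c • x i (sig i)
  hadvlinf : ∀ t i p k, |xadv t i p k - x i p k| ≤ eps
  hadvlearn : ∀ t : ℕ, ∀ i ∈ SL,
    alpha - eps ≤ y i * dot (xadv t i (sig i)) (e1 d hd) ∧
      y i * dot (xadv t i (sig i)) (e1 d hd) ≤ alpha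

namespace Setting

variable (S : Setting)

/-- Adversarial margin `y_i f_{W^{(t)}}(X̃_i^{(t)})`. -/
def marg (t : ℕ) (i : Fin S.N) : ℝ := S.y i * netOut (S.w t) (S.xadv t i)

/-- Signal coordinate `w_{r,1}^{(t)}`. -/
def wsig (t : ℕ) (r : Fin S.m) : ℝ := S.w t r ⟨0, S.hd⟩

/-- Unlearnable fraction `p_un = |S_U|/N`. -/
def pun : ℝ := (S.SU.card : ℝ) / S.N

/-- The adversarial-training gradient-descent dynamics. -/
def ATDyn : Prop :=
  ∀ t r, S.w (t + 1) r = S.w t r +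
    (3 * S.eta / S.N) •
      ∑ i : Fin S.N, (psi (S.marg t i) * S.y i) •
        ∑ p : Fin S.P, (dot (S.w t r) (S.xadv t i p)) ^ 2 • S.xadv t i p

/-- The signed gradient weight of sample `i` at iteration `t` under adversarial
distillation from teacher logits `fT`. -/
def gAD (fT : Fin S.N → ℝ) (t : ℕ) (i : Fin S.N) : ℝ :=
  sigm (S.y i * fT i) * psi (S.marg t i) - sigm (-(S.y i * fT i)) * psi (-(S.marg t i))

/-- The adversarial-distillation gradient-descent dynamics. -/
def ADDyn (fT : Fin S.N → ℝ) : Prop :=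
  ∀ t r, S.w (t + 1) r = S.w t r +
    (3 * S.eta / S.N) •
      ∑ i : Fin S.N, (S.gAD fT t i * S.y i) •
        ∑ p : Fin S.P, (dot (S.w t r) (S.xadv t i p)) ^ 2 • S.xadv t i p

/-- Noise coefficients `ρ_{i,j,r}^{(t)}` (adversarial training). -/
def rho (i : Fin S.N) (j : Fin S.P) (r : Fin S.m) : ℕ → ℝ
  | 0 => 0
  | t + 1 => rho i j r t + (3 * S.eta / S.N) * psi (S.marg t i) * (dot (S.w t r) (S.x i j)) ^ 2

/-- Noise coefficients under adversarial distillation. -/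
def rhoAD (fT : Fin S.N → ℝ) (i : Fin S.N) (j : Fin S.P) (r : Fin S.m) : ℕ → ℝ
  | 0 => 0
  | t + 1 => rhoAD fT i j r t + (3 * S.eta / S.N) * S.gAD fT t i * (dot (S.w t r) (S.x i j)) ^ 2

/-- The event `E` for a setting. -/
def EventE : Prop :=
  EventEOn S.N S.m S.P S.d S.hd S.sigman S.sigma0 S.delta S.y S.sig S.x (S.w 0)

/-- Condition (H): the parameter requirements of Condition 4.1 of the paper
(without the unlearnable-fraction regime item, which is imposed separately). -/
def CondH (C : ℝ) : Prop :=
  1 ≤ C ∧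
  -- training horizon
  C * S.N / (S.eta * S.sigma0 * S.sigman ^ 3 * ((S.d : ℝ) * Real.sqrt S.d)) ≤ (S.T : ℝ) ∧
  -- dimension
  C * S.m ^ 2 * S.P ^ 2 * S.N ^ 2 *
      (Real.log ((S.T : ℝ) * S.N * S.m * S.P / S.delta)) ^ 4 ≤ (S.d : ℝ) ∧
  -- signal strength
  C * S.sigman * Real.sqrt S.d * Real.log ((S.T : ℝ) * S.N * S.m * S.P / S.delta) /
      (((S.N : ℝ) * (1 - S.pun)) ^ ((1 : ℝ) / 3)) ≤ S.alpha ∧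
  -- initialization scale
  S.sigma0 ≤
    C⁻¹ *
        min (min (1 / ((S.m : ℝ) ^ ((2 : ℝ) / 3) * (S.P : ℝ) ^ ((2 : ℝ) / 3) *
            S.sigman * Real.sqrt S.d))
          (1 / (S.alpha * (S.m : ℝ) ^ ((2 : ℝ) / 3))))
          (1 / (S.sigman * S.m ^ 2 * Real.sqrt S.P * S.d)) /
      Real.log ((S.T : ℝ) * S.d * S.N * S.m * S.P / S.delta) ∧
  -- learning rate
  S.eta ≤
    C⁻¹ * min (min (1 / (S.alpha ^ 3 * S.sigma0)) (1 / (S.sigman ^ 2 * S.d))) (1 / S.alpha ^ 2) /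
      Real.log ((S.T : ℝ) * S.N * S.m * S.P / S.delta) ∧
  -- adversarial budget
  C * S.sigman * S.m * Real.sqrt S.P * Real.log ((S.T : ℝ) * S.d * S.N * S.P / S.delta) ≤ S.eps ∧
  S.eps < C⁻¹ * min S.alpha (1 / (S.m * S.sigma0 * S.d)) ∧
  -- width and number of patches
  C * Real.log ((S.N : ℝ) * S.P / S.delta) ≤ (S.m : ℝ) ∧
  (S.m : ℝ) ≤ C * Real.log S.d ^ C ∧
  2 ≤ S.P ∧ (S.P : ℝ) ≤ C

/-- The sparse-unlearnable regime of Condition 4.1. -/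
def SparseRegime (C : ℝ) : Prop :=
  C / S.N ≤ S.pun ∧ S.pun ≤ C⁻¹ * Real.log S.d / S.N ∧
  C * S.m * S.P * Real.log ((S.T : ℝ) * S.d * S.N * S.m * S.P / S.delta) ≤ (S.N : ℝ)

/-- The noise-stability bound (NS) on learnable samples at iteration `t`. -/
def NS (t : ℕ) : Prop :=
  ∀ r : Fin S.m, ∀ i ∈ S.SL, ∀ j, j ≠ S.sig i →
    |dot (S.w t r) (S.x i j)| ≤
      3 * S.sigma0 * S.sigman *
          Real.sqrt ((S.d : ℝ) * Real.log ((16 : ℝ) * S.N * S.m * S.P / S.delta)) +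
        21 * S.pun * S.N * S.P * Real.log S.T ^ ((1 : ℝ) / 3) / Real.sqrt S.d *
          Real.sqrt (Real.log ((16 : ℝ) * S.N ^ 2 * S.P ^ 2 / S.delta))

/-- The signal-learning hitting time `T₀`. -/
def T0 (C0 : ℝ) : ℕ :=
  sInf {t : ℕ | ∃ r, C0 / (S.alpha * (S.m : ℝ) ^ ((1 : ℝ) / 3)) < S.wsig t r}

/-- Maximum of the noise coefficients over unlearnable noise patches. -/
def rhoMaxSU (t : ℕ) : ℝ :=
  sSup {z : ℝ | ∃ r : Fin S.m, ∃ k ∈ S.SU, ∃ q, q ≠ S.sig k ∧ z = S.rho k q r t}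

/-- Shifted noise coefficients `ρ̂_{i,j,r}^{(t)}`. -/
def rhoHat (i : Fin S.N) (j : Fin S.P) (r : Fin S.m) (t : ℕ) : ℝ :=
  S.rho i j r t + S.y i * dot (S.w 0 r) (S.x i j) / sqnorm (S.x i j)

/-- Maximum shifted noise coefficient over unlearnable noise patches. -/
def rhoHatMax (t : ℕ) : ℝ :=
  sSup {z : ℝ | ∃ r : Fin S.m, ∃ k ∈ S.SU, ∃ q, q ≠ S.sig k ∧ z = S.rhoHat k q r t}

/-- The noise-memorization hitting time `T₁`. -/
def T1 (C1 : ℝ) : ℕ :=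
  sInf {t : ℕ | C1 / (((S.m : ℝ) * S.P) ^ ((1 : ℝ) / 3) * S.sigman ^ 2 * S.d) < S.rhoHatMax t}

/-- The Good-Teacher horizon `T_max`. -/
def Tmax : ℝ :=
  S.N / (1000 * S.eta * S.m * S.P * S.sigma0 ^ 4 * S.sigman ^ 6 * (S.d : ℝ) ^ 3 *
    Real.log ((16 : ℝ) * S.N * S.m * S.P / S.delta) ^ 2)

end Setting

/-!
Gradient descent only moves a filter inside the span of the signal patches and the noise patches,
and the noise patches are nearly orthogonal. So, as long as all noise coefficients are `O(λ / n)`,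
where `λ³ = log T` and `n = σ_n² d`, a filter sees a noise patch through that patch's own
coefficient, up to an error `e` so small that `m P e³ ≤ 1 / 8`. A coefficient above `9 λ / n` then
contributes at least `(4 λ)³` to the adversarial margin of its sample, while all other summands
together cost at most `1 / 4`: those of the signal patches because the signal coordinate of a filter
never decreases. The margin is therefore at least `log T`, the sigmoid weight of the sample is at
most `1 / T`, and during `T` iterations the coefficient can grow only by `λ / (2 n)` more. Below
`9 λ / n` a single step adds at most `λ / (2 n)`, whence the bound `10 λ / n`.
-/

section RealLemmas

lemma rpow_one_third_pow_three {x : ℝ} (hx : 0 ≤ x) : (x ^ ((1 : ℝ) / 3)) ^ 3 = x := by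
  simpa using Real.rpow_inv_natCast_pow hx three_ne_zero

lemma sqrt_le_of_one_le_of_le {z a : ℝ} (ha : 1 ≤ a) (hz : z ≤ a) : √z ≤ a := by
  rw [Real.sqrt_le_left (by linarith)]
  exact hz.trans (le_self_pow₀ ha two_ne_zero)

lemma neg_pow_three_le_pow_three {a z : ℝ} (h : -a ≤ z) : -a ^ 3 ≤ z ^ 3 := by
  rw [← Odd.neg_pow (by decide)]
  exact (Odd.strictMono_pow (by decide)).monotone h

lemma mul_le_one_of_le_inv_mul_div {C s v a L : ℝ} (hC : 0 < C) (ha : 0 < a) (hL : 0 < L)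
    (hs : s ≤ C⁻¹ * v / L) (hv : v ≤ 1 / a) : C * (s * a * L) ≤ 1 := by
  calc C * (s * a * L) ≤ C * (C⁻¹ * (1 / a) / L * a * L) := by
        gcongr
        exact hs.trans (by gcongr)
    _ = 1 := by field_simp

lemma apply_sub_sum_le_sum {ι : Type*} [Fintype ι] {f b : ι → ℝ} (hb : ∀ i, 0 ≤ b i)
    (hf : ∀ i, -b i ≤ f i) (i : ι) : f i - ∑ j, b j ≤ ∑ j, f j := by
  have hsingle : f i + b i ≤ ∑ j, (f j + b j) :=
    single_le_sum (f := fun j => f j + b j) (fun j _ => by linarith [hf j]) (mem_univ i)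
  rw [sum_add_distrib] at hsingle
  linarith [hb i]

lemma le_add_mul_of_slow_above {ι : Type*} {a : ι → ℕ → ℝ} {T : ℕ} {b δ ε : ℝ} (hε : 0 ≤ ε)
    (hzero : ∀ i, a i 0 ≤ b + δ)
    (hstep : ∀ s < T, (∀ i, a i s ≤ b + δ + T * ε) → ∀ i,
      a i (s + 1) ≤ a i s + δ ∧ (b < a i s → a i (s + 1) ≤ a i s + ε)) :
    ∀ s ≤ T, ∀ i, a i s ≤ b + δ + T * ε := by
  suffices hlin : ∀ s ≤ T, ∀ i, a i s ≤ b + δ + s * ε from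
    fun s hs i => (hlin s hs i).trans (by gcongr)
  intro s
  induction s with
  | zero => simpa using hzero
  | succ s ih =>
    intro hs i
    have ih := ih (by omega)
    obtain ⟨hjump, hslow⟩ := hstep s hs (fun k => (ih k).trans (by gcongr; omega)) i
    have hgrow : ((s + 1 : ℕ) : ℝ) * ε = s * ε + ε := by push_cast; ring
    rcases le_or_gt (a i s) b with hle | hgt
    · have : 0 ≤ (s : ℝ) * ε := by positivity
      linarith
    · linarith [hslow hgt, ih i]

end RealLemmas

section Dot

variable {d : ℕ}

lemma dot_comm (a b : Fin d → ℝ) : dot a b = dot b a :=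
  dotProduct_comm a b

lemma dot_add_left (a b c : Fin d → ℝ) : dot (a + b) c = dot a c + dot b c :=
  add_dotProduct a b c

lemma dot_smul_left (s : ℝ) (a c : Fin d → ℝ) : dot (s • a) c = s * dot a c :=
  smul_dotProduct s a c

lemma dot_smul_right (s : ℝ) (a c : Fin d → ℝ) : dot a (s • c) = s * dot a c :=
  dotProduct_smul s a c

lemma dot_sum_left {ι : Type*} (s : Finset ι) (f : ι → Fin d → ℝ) (c : Fin d → ℝ) :
    dot (∑ i ∈ s, f i) c = ∑ i ∈ s, dot (f i) c :=
  sum_dotProduct s f c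

lemma dot_e1 (hd : 0 < d) (a : Fin d → ℝ) : dot a (e1 d hd) = a ⟨0, hd⟩ := by
  simp [dot, e1]

lemma dot_eLast_e1 (hd : 0 < d) (h2 : 2 ≤ d) : dot (eLast d hd) (e1 d hd) = 0 := by
  rw [dot_e1, eLast, if_neg (by simp only; omega)]

end Dot

section Activation

lemma psi_pos (z : ℝ) : 0 < psi z := by unfold psi; positivity

lemma psi_le_one (z : ℝ) : psi z ≤ 1 := by
  rw [psi, div_le_one (by positivity)]
  linarith [Real.exp_pos z]

lemma psi_le_exp_neg (z : ℝ) : psi z ≤ Real.exp (-z) := by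
  rw [psi, Real.exp_neg, one_div]
  exact inv_anti₀ (Real.exp_pos z) (by linarith)

lemma phi_sub_phi_neg (z : ℝ) : phi z - phi (-z) = z ^ 3 := by
  unfold phi
  rcases le_total 0 z with h | h
  · rw [max_eq_right h, max_eq_left (by linarith)]; ring
  · rw [max_eq_left h, max_eq_right (by linarith)]; ring

end Activation

namespace Setting

variable {S : Setting} {t : ℕ}

section Samples

lemma y_mul_y (i : Fin S.N) : S.y i * S.y i = 1 :=
  mul_self_eq_one_iff.mpr (S.hy i)

lemma abs_y (i : Fin S.N) : |S.y i| = 1 := by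
  rcases S.hy i with h | h <;> simp [h]

lemma mem_SL_or_mem_SU (i : Fin S.N) : i ∈ S.SL ∨ i ∈ S.SU := by
  rw [← mem_union, S.hunion]; exact mem_univ i

lemma exists_xadv_sig_eq_smul (t : ℕ) (i : Fin S.N) :
    ∃ c : ℝ, S.xadv t i (S.sig i) = c • S.x i (S.sig i) := by
  obtain ⟨c, hc⟩ := S.hadvspan t i
  exact ⟨c + 1, by rw [add_smul, one_smul, ← hc, sub_add_cancel]⟩

lemma exists_xadv_sig_eq_of_mem_SL (t : ℕ) {i : Fin S.N} (hi : i ∈ S.SL) :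
    ∃ a, 0 ≤ a ∧ a ≤ S.alpha ∧ S.xadv t i (S.sig i) = (S.y i * a) • e1 S.d S.hd := by
  obtain ⟨c, hc⟩ := S.exists_xadv_sig_eq_smul t i
  obtain ⟨hlow, hupp⟩ := S.hadvlearn t i hi
  have hdot : S.y i * dot (S.xadv t i (S.sig i)) (e1 S.d S.hd) = c * S.alpha := by
    rw [hc, S.hsigL i hi, dot_smul_left, dot_smul_left, dot_e1, e1, if_pos rfl]
    linear_combination (c * S.alpha) * S.y_mul_y i
  refine ⟨c * S.alpha, by linarith [S.hepsalpha], by linarith, ?_⟩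
  rw [hc, S.hsigL i hi, smul_smul]
  congr 1
  ring

lemma exists_xadv_sig_eq_of_mem_SU (t : ℕ) {i : Fin S.N} (hi : i ∈ S.SU) :
    ∃ a : ℝ, S.xadv t i (S.sig i) = a • eLast S.d S.hd := by
  obtain ⟨c, hc⟩ := S.exists_xadv_sig_eq_smul t i
  exact ⟨c * (S.alpha * S.y i), by rw [hc, S.hsigU i hi, smul_smul]⟩

lemma dot_xadv_sig_noise (t : ℕ) (k : Fin S.N) {i : Fin S.N} {j : Fin S.P} (hj : j ≠ S.sig i) :
    dot (S.xadv t k (S.sig k)) (S.x i j) = 0 := by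
  rcases S.mem_SL_or_mem_SU k with hk | hk
  · obtain ⟨a, -, -, ha⟩ := S.exists_xadv_sig_eq_of_mem_SL t hk
    rw [ha, dot_smul_left, dot_comm, S.hnoiseU i j hj, mul_zero]
  · obtain ⟨a, ha⟩ := S.exists_xadv_sig_eq_of_mem_SU t hk
    rw [ha, dot_smul_left, dot_comm, S.hnoiseV i j hj, mul_zero]

lemma y_mul_dot_xadv_e1_nonneg (hd : 2 ≤ S.d) (t : ℕ) (i : Fin S.N) (p : Fin S.P) :
    0 ≤ S.y i * dot (S.xadv t i p) (e1 S.d S.hd) := by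
  rcases eq_or_ne p (S.sig i) with rfl | hp
  · rcases S.mem_SL_or_mem_SU i with hi | hi
    · linarith [(S.hadvlearn t i hi).1, S.hepsalpha]
    · obtain ⟨a, ha⟩ := S.exists_xadv_sig_eq_of_mem_SU t hi
      rw [ha, dot_smul_left, dot_eLast_e1 S.hd hd, mul_zero, mul_zero]
  · rw [S.hadvnoise t i p hp, S.hnoiseU i p hp, mul_zero]

lemma neg_mul_le_y_mul_dot_w_xadv_sig {g : ℝ} (hg : 0 ≤ g) {r : Fin S.m} (hw : -g ≤ S.wsig t r)
    (i : Fin S.N) : -(S.alpha * g) ≤ S.y i * dot (S.w t r) (S.xadv t i (S.sig i)) := by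
  rcases S.mem_SL_or_mem_SU i with hi | hi
  · obtain ⟨a, ha, haα, hx⟩ := S.exists_xadv_sig_eq_of_mem_SL t hi
    calc -(S.alpha * g) ≤ a * -g := by linarith [mul_le_mul_of_nonneg_right haα hg]
      _ ≤ a * S.wsig t r := by gcongr
      _ = S.y i * dot (S.w t r) (S.xadv t i (S.sig i)) := by
        rw [hx, dot_smul_right, dot_e1, wsig]
        linear_combination (-(a * S.w t r ⟨0, S.hd⟩)) * S.y_mul_y i
  · obtain ⟨a, ha⟩ := S.exists_xadv_sig_eq_of_mem_SU t hi
    rw [ha, dot_smul_right, S.hwperp, mul_zero, mul_zero, neg_nonpos]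
    exact mul_nonneg S.halpha.le hg

end Samples

section Dynamics

lemma rho_nonneg (i : Fin S.N) (j : Fin S.P) (r : Fin S.m) (t : ℕ) : 0 ≤ S.rho i j r t := by
  induction t with
  | zero => exact le_rfl
  | succ t ih =>
    have := psi_pos (S.marg t i)
    have := S.heta
    rw [rho]
    positivity

lemma ATDyn.dot_w_succ (hdyn : S.ATDyn) (t : ℕ) (r : Fin S.m) (v : Fin S.d → ℝ) :
    dot (S.w (t + 1) r) v = dot (S.w t r) v + ∑ q : Fin S.N × Fin S.P,
      3 * S.eta / S.N * psi (S.marg t q.1) * dot (S.w t r) (S.xadv t q.1 q.2) ^ 2 *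
        (S.y q.1 * dot (S.xadv t q.1 q.2) v) := by
  rw [hdyn, dot_add_left, dot_smul_left, dot_sum_left, mul_sum, Fintype.sum_prod_type]
  congr 1
  refine sum_congr rfl fun i _ => ?_
  rw [dot_smul_left, dot_sum_left, mul_sum, mul_sum]
  refine sum_congr rfl fun p _ => ?_
  rw [dot_smul_left]
  ring

lemma ATDyn.monotone_wsig (hdyn : S.ATDyn) (hd : 2 ≤ S.d) (r : Fin S.m) :
    Monotone fun t => S.wsig t r := by
  refine monotone_nat_of_le_succ fun t => ?_
  have hstep := hdyn.dot_w_succ t r (e1 S.d S.hd)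
  rw [dot_e1, dot_e1] at hstep
  rw [wsig, wsig, hstep]
  refine le_add_of_nonneg_right (sum_nonneg fun q _ => ?_)
  have := S.y_mul_dot_xadv_e1_nonneg hd t q.1 q.2
  have := psi_pos (S.marg t q.1)
  have := S.heta
  positivity

variable (S) in
/-- The index pairs `(i, j)`, `j ≠ s(X_i)`, of all noise patches of the training set. -/
def noisePatches : Finset (Fin S.N × Fin S.P) := {q | q.2 ≠ S.sig q.1}

lemma mem_noisePatches {q : Fin S.N × Fin S.P} : q ∈ S.noisePatches ↔ q.2 ≠ S.sig q.1 := by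
  simp [noisePatches]

lemma ATDyn.dot_w_noise (hdyn : S.ATDyn) (r : Fin S.m) {i : Fin S.N} {j : Fin S.P}
    (hj : j ≠ S.sig i) (t : ℕ) :
    dot (S.w t r) (S.x i j) = dot (S.w 0 r) (S.x i j) +
      ∑ q ∈ S.noisePatches, S.y q.1 * S.rho q.1 q.2 r t * dot (S.x q.1 q.2) (S.x i j) := by
  induction t with
  | zero => simp [rho]
  | succ t ih =>
    rw [hdyn.dot_w_succ, ih, add_assoc]
    congr 1
    rw [← sum_subset (subset_univ S.noisePatches), ← sum_add_distrib]
    · refine sum_congr rfl fun q hq => ?_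
      rw [S.hadvnoise t q.1 q.2 (mem_noisePatches.mp hq), rho]
      ring
    · intro q _ hq
      rw [mem_noisePatches, not_not] at hq
      rw [hq, S.dot_xadv_sig_noise t q.1 hj, mul_zero, mul_zero]

end Dynamics

section NoiseAlignment

variable (S) in
/-- Norm, cross-correlation and initialization bounds for the noise patches and the initial filters.
The concentration event `E` provides them with `n = σ_n² d` and the scales `crossScale`,
`initScale` and `signalScale`. -/
structure NoiseBounds (n c I g : ℝ) : Prop where
  norm_pos : 0 < n
  cross_nonneg : 0 ≤ c
  le_sqnorm : ∀ i j, j ≠ S.sig i → n / 2 ≤ sqnorm (S.x i j)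
  sqnorm_le : ∀ i j, j ≠ S.sig i → sqnorm (S.x i j) ≤ 3 * n / 2
  abs_cross_le : ∀ i k j q, j ≠ S.sig i → q ≠ S.sig k → ((i, j) : Fin S.N × Fin S.P) ≠ (k, q) →
    |dot (S.x i j) (S.x k q)| ≤ c
  abs_init_le : ∀ r i j, j ≠ S.sig i → |dot (S.w 0 r) (S.x i j)| ≤ I
  abs_wsig_zero_le : ∀ r, |S.wsig 0 r| ≤ g

variable (S) in
/-- At iteration `t` every filter sees every noise patch through that patch's own noise coefficient,
up to an error `e`. -/
def NoiseAligned (t : ℕ) (e : ℝ) : Prop :=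
  ∀ r i j, j ≠ S.sig i →
    |S.y i * dot (S.w t r) (S.x i j) - S.rho i j r t * sqnorm (S.x i j)| ≤ e

variable {n c I g e : ℝ}

lemma NoiseBounds.abs_sum_cross_le (hB : S.NoiseBounds n c I g) {b : ℝ} (hb : 0 ≤ b)
    {a : Fin S.N × Fin S.P → ℝ} (ha : ∀ q ∈ S.noisePatches, |a q| ≤ b) {i : Fin S.N} {j : Fin S.P}
    (hj : j ≠ S.sig i) :
    |∑ q ∈ S.noisePatches.erase (i, j), a q * dot (S.x q.1 q.2) (S.x i j)| ≤
      S.N * S.P * (b * c) := by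
  have hc := hB.cross_nonneg
  have hterm : ∀ q ∈ S.noisePatches.erase (i, j),
      |a q * dot (S.x q.1 q.2) (S.x i j)| ≤ b * c := by
    intro q hq
    obtain ⟨hne, hq⟩ := mem_erase.mp hq
    rw [abs_mul]
    gcongr
    · exact ha q hq
    · exact hB.abs_cross_le _ _ _ _ (mem_noisePatches.mp hq) hj hne
  have hcard : ((S.noisePatches.erase (i, j)).card : ℝ) ≤ S.N * S.P := by
    have := card_le_univ (S.noisePatches.erase (i, j))
    rw [Fintype.card_prod, Fintype.card_fin, Fintype.card_fin] at this
    exact_mod_cast this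
  calc |∑ q ∈ S.noisePatches.erase (i, j), a q * dot (S.x q.1 q.2) (S.x i j)|
      ≤ ∑ q ∈ S.noisePatches.erase (i, j), |a q * dot (S.x q.1 q.2) (S.x i j)| :=
        abs_sum_le_sum_abs _ _
    _ ≤ (S.noisePatches.erase (i, j)).card • (b * c) := sum_le_card_nsmul _ _ _ hterm
    _ ≤ S.N * S.P * (b * c) := by rw [nsmul_eq_mul]; gcongr

lemma NoiseBounds.noiseAligned (hB : S.NoiseBounds n c I g) (hdyn : S.ATDyn) {b : ℝ}
    (hrho : ∀ r i j, j ≠ S.sig i → S.rho i j r t ≤ b) :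
    S.NoiseAligned t (I + S.N * S.P * (b * c)) := by
  intro r i j hj
  set R := ∑ q ∈ S.noisePatches.erase (i, j),
    S.y q.1 * S.rho q.1 q.2 r t * dot (S.x q.1 q.2) (S.x i j)
  have hR : |R| ≤ S.N * S.P * (b * c) := by
    refine hB.abs_sum_cross_le ((S.rho_nonneg i j r t).trans (hrho r i j hj)) (fun q hq => ?_) hj
    rw [abs_mul, abs_y, one_mul, abs_of_nonneg (S.rho_nonneg _ _ _ _)]
    exact hrho r _ _ (mem_noisePatches.mp hq)
  have hown : S.y i * dot (S.w t r) (S.x i j) - S.rho i j r t * sqnorm (S.x i j) =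
      S.y i * (dot (S.w 0 r) (S.x i j) + R) := by
    have hmem : (i, j) ∈ S.noisePatches := mem_noisePatches.mpr hj
    rw [hdyn.dot_w_noise r hj t, ← add_sum_erase _ _ hmem, sqnorm]
    linear_combination (S.rho i j r t * dot (S.x i j) (S.x i j)) * S.y_mul_y i
  rw [hown, abs_mul, abs_y, one_mul]
  exact (abs_add_le _ _).trans (add_le_add (hB.abs_init_le r i j hj) hR)

lemma NoiseAligned.rho_mul_sub_le (he : S.NoiseAligned t e) (hB : S.NoiseBounds n c I g)
    (r : Fin S.m) {i : Fin S.N} {j : Fin S.P} (hj : j ≠ S.sig i) :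
    S.rho i j r t * (n / 2) - e ≤ S.y i * dot (S.w t r) (S.x i j) := by
  have := (abs_le.mp (he r i j hj)).1
  have := mul_le_mul_of_nonneg_left (hB.le_sqnorm i j hj) (S.rho_nonneg i j r t)
  linarith

lemma NoiseAligned.neg_le (he : S.NoiseAligned t e) (hB : S.NoiseBounds n c I g)
    (r : Fin S.m) {i : Fin S.N} {j : Fin S.P} (hj : j ≠ S.sig i) :
    -e ≤ S.y i * dot (S.w t r) (S.x i j) := by
  have := mul_nonneg (S.rho_nonneg i j r t) hB.norm_pos.le
  linarith [he.rho_mul_sub_le hB r hj]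

lemma NoiseAligned.dot_sq_le (he : S.NoiseAligned t e) (hB : S.NoiseBounds n c I g) {b : ℝ}
    {r : Fin S.m} {i : Fin S.N} {j : Fin S.P} (hj : j ≠ S.sig i) (hrho : S.rho i j r t ≤ b) :
    dot (S.w t r) (S.x i j) ^ 2 ≤ (3 / 2 * (b * n) + e) ^ 2 := by
  have hn := hB.norm_pos
  have hb : 0 ≤ b := (S.rho_nonneg i j r t).trans hrho
  have hlow := he.neg_le hB r hj
  have hupp : S.y i * dot (S.w t r) (S.x i j) ≤ b * (3 * n / 2) + e := by
    have := (abs_le.mp (he r i j hj)).2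
    have : S.rho i j r t * sqnorm (S.x i j) ≤ b * (3 * n / 2) :=
      mul_le_mul hrho (hB.sqnorm_le i j hj)
        ((by positivity : 0 ≤ n / 2).trans (hB.le_sqnorm i j hj)) hb
    linarith
  have hsq : dot (S.w t r) (S.x i j) ^ 2 = (S.y i * dot (S.w t r) (S.x i j)) ^ 2 := by
    linear_combination (-dot (S.w t r) (S.x i j) ^ 2) * S.y_mul_y i
  rw [hsq]
  have := mul_nonneg hb hn.le
  exact sq_le_sq' (by linarith) (by linarith)

end NoiseAlignment

section Margin

lemma marg_eq_sum (t : ℕ) (i : Fin S.N) :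
    S.marg t i =
      ∑ q : Fin S.m × Fin S.P, (S.y i * dot (S.w t q.1) (S.xadv t i q.2)) ^ 3 := by
  have hy : S.y i ^ 3 = S.y i := by rw [pow_succ, sq, y_mul_y, one_mul]
  simp only [marg, netOut, phi_sub_phi_neg, mul_pow, hy, Fintype.sum_prod_type, mul_sum]

lemma pow_three_sub_le_marg {e s : ℝ} {i : Fin S.N} (he : 0 ≤ e) (hs : 0 ≤ s)
    (hnoise : ∀ r j, j ≠ S.sig i → -e ≤ S.y i * dot (S.w t r) (S.x i j))
    (hsignal : ∀ r, -s ≤ S.y i * dot (S.w t r) (S.xadv t i (S.sig i)))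
    (r : Fin S.m) {j : Fin S.P} (hj : j ≠ S.sig i) :
    (S.y i * dot (S.w t r) (S.x i j)) ^ 3 - (S.m * S.P * e ^ 3 + S.m * s ^ 3) ≤ S.marg t i := by
  let loss : Fin S.m × Fin S.P → ℝ := fun q => e ^ 3 + if q.2 = S.sig i then s ^ 3 else 0
  have he3 : 0 ≤ e ^ 3 := by positivity
  have hloss : ∀ q, 0 ≤ loss q := fun q => by positivity
  have hsum : ∑ q, loss q = S.m * S.P * e ^ 3 + S.m * s ^ 3 := by
    simp [loss, sum_add_distrib, Fintype.sum_prod_type, mul_assoc]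
  have hterm : ∀ q, -loss q ≤ (S.y i * dot (S.w t q.1) (S.xadv t i q.2)) ^ 3 := by
    rintro ⟨r, p⟩
    rcases eq_or_ne p (S.sig i) with rfl | hp
    · simp only [loss, if_pos]
      linarith [neg_pow_three_le_pow_three (hsignal r)]
    · simp only [loss, if_neg hp, add_zero, S.hadvnoise t i p hp]
      exact neg_pow_three_le_pow_three (hnoise r p hp)
  have := apply_sub_sum_le_sum hloss hterm (r, j)
  rwa [hsum, ← marg_eq_sum, S.hadvnoise t i j hj] at this

variable {n c I g e s lam : ℝ}

lemma NoiseAligned.psi_marg_le_inv (he : S.NoiseAligned t e) (hB : S.NoiseBounds n c I g)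
    (hT : 0 < S.T) (hlam : 1 ≤ lam) (hlamT : lam ^ 3 = Real.log S.T)
    (he0 : 0 ≤ e) (hs0 : 0 ≤ s)
    (hme : ((S.m : ℝ) * S.P) ^ ((1 : ℝ) / 3) * e ≤ 1 / 2)
    (hms : (S.m : ℝ) ^ ((1 : ℝ) / 3) * s ≤ 1 / 2) {i : Fin S.N}
    (hsignal : ∀ r, -s ≤ S.y i * dot (S.w t r) (S.xadv t i (S.sig i)))
    {r : Fin S.m} {j : Fin S.P} (hj : j ≠ S.sig i)
    (hlarge : 4 * lam ≤ S.y i * dot (S.w t r) (S.x i j)) :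
    psi (S.marg t i) ≤ 1 / S.T := by
  have hnoiseLoss : S.m * S.P * e ^ 3 ≤ (1 / 2) ^ 3 := by
    rw [← rpow_one_third_pow_three (by positivity : 0 ≤ (S.m : ℝ) * S.P), ← mul_pow]
    gcongr
  have hsignalLoss : S.m * s ^ 3 ≤ (1 / 2) ^ 3 := by
    rw [← rpow_one_third_pow_three (by positivity : 0 ≤ (S.m : ℝ)), ← mul_pow]
    gcongr
  have hmarg : Real.log S.T ≤ S.marg t i := by
    have hcube : (4 * lam) ^ 3 ≤ (S.y i * dot (S.w t r) (S.x i j)) ^ 3 := by gcongr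
    have := pow_three_sub_le_marg he0 hs0 (fun r j hj => he.neg_le hB r hj) hsignal r hj
    have : 1 ≤ lam ^ 3 := one_le_pow₀ hlam
    rw [mul_pow] at hcube
    linarith
  calc psi (S.marg t i) ≤ Real.exp (-S.marg t i) := psi_le_exp_neg _
    _ ≤ Real.exp (-Real.log S.T) := by gcongr
    _ = 1 / S.T := by rw [Real.exp_neg, Real.exp_log (by exact_mod_cast hT), one_div]

end Margin

section Bootstrap

variable {n c I g e lam : ℝ}

lemma NoiseAligned.rho_succ_le (he : S.NoiseAligned t e) (hB : S.NoiseBounds n c I g)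
    (hlam : 1 ≤ lam) (he0 : 0 ≤ e) (hehalf : e ≤ 1 / 2) (hrate : 1536 * (S.eta * n * lam) ≤ 1)
    {r : Fin S.m} {i : Fin S.N} {j : Fin S.P} (hj : j ≠ S.sig i)
    (hrho : S.rho i j r t ≤ 10 * lam / n) :
    S.rho i j r (t + 1) ≤ S.rho i j r t + psi (S.marg t i) * (lam / (2 * n)) := by
  have hn := hB.norm_pos
  have hη := S.heta
  have hψ := psi_pos (S.marg t i)
  have hN : (1 : ℝ) ≤ S.N := by exact_mod_cast S.hN
  have hsq : dot (S.w t r) (S.x i j) ^ 2 ≤ (16 * lam) ^ 2 := by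
    refine (he.dot_sq_le hB hj hrho).trans ?_
    rw [div_mul_cancel₀ _ hn.ne']
    gcongr
    linarith
  have hsmall : 3 * S.eta * (16 * lam) ^ 2 ≤ lam / (2 * n) := by
    rw [le_div_iff₀ (by positivity)]
    calc 3 * S.eta * (16 * lam) ^ 2 * (2 * n) = 1536 * (S.eta * n * lam) * lam := by ring
      _ ≤ 1 * lam := by gcongr
      _ = lam := one_mul lam
  rw [rho]
  refine add_le_add_right ?_ _
  calc 3 * S.eta / S.N * psi (S.marg t i) * dot (S.w t r) (S.x i j) ^ 2
      ≤ 3 * S.eta * psi (S.marg t i) * (16 * lam) ^ 2 := by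
        gcongr
        exact div_le_self (by positivity) hN
    _ = psi (S.marg t i) * (3 * S.eta * (16 * lam) ^ 2) := by ring
    _ ≤ psi (S.marg t i) * (lam / (2 * n)) := by gcongr

lemma NoiseAligned.rho_succ_le_of_large (he : S.NoiseAligned t e) (hB : S.NoiseBounds n c I g)
    (hdyn : S.ATDyn) (hd : 2 ≤ S.d) (hT : 0 < S.T) (hlam : 1 ≤ lam)
    (hlamT : lam ^ 3 = Real.log S.T) (he0 : 0 ≤ e) (hehalf : e ≤ 1 / 2)
    (hme : ((S.m : ℝ) * S.P) ^ ((1 : ℝ) / 3) * e ≤ 1 / 2)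
    (hms : (S.m : ℝ) ^ ((1 : ℝ) / 3) * (S.alpha * g) ≤ 1 / 2)
    (hrate : 1536 * (S.eta * n * lam) ≤ 1) {r : Fin S.m} {i : Fin S.N} {j : Fin S.P}
    (hj : j ≠ S.sig i) (hrho : S.rho i j r t ≤ 10 * lam / n)
    (hlarge : 9 * lam / n < S.rho i j r t) :
    S.rho i j r (t + 1) ≤ S.rho i j r t + 1 / S.T * (lam / (2 * n)) := by
  have hn := hB.norm_pos
  have hg : 0 ≤ g := (abs_nonneg _).trans (hB.abs_wsig_zero_le r)
  have hdot : 4 * lam ≤ S.y i * dot (S.w t r) (S.x i j) := by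
    have := he.rho_mul_sub_le hB r hj
    have : 9 * lam ≤ S.rho i j r t * n := ((div_lt_iff₀ hn).mp hlarge).le
    linarith
  have hsignal : ∀ r, -(S.alpha * g) ≤ S.y i * dot (S.w t r) (S.xadv t i (S.sig i)) := fun r =>
    neg_mul_le_y_mul_dot_w_xadv_sig hg ((abs_le.mp (hB.abs_wsig_zero_le r)).1.trans
      (hdyn.monotone_wsig hd r t.zero_le)) i
  refine (he.rho_succ_le hB hlam he0 hehalf hrate hj hrho).trans ?_
  gcongr
  exact he.psi_marg_le_inv hB hT hlam hlamT he0 (mul_nonneg S.halpha.le hg) hme hms hsignal hj hdot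

theorem NoiseBounds.rho_le (hB : S.NoiseBounds n c I g) (hdyn : S.ATDyn) (hd : 2 ≤ S.d)
    (hT : 0 < S.T) (hlam : 1 ≤ lam) (hlamT : lam ^ 3 = Real.log S.T)
    (hme : ((S.m : ℝ) * S.P) ^ ((1 : ℝ) / 3) * (I + S.N * S.P * (10 * lam / n * c)) ≤ 1 / 2)
    (hms : (S.m : ℝ) ^ ((1 : ℝ) / 3) * (S.alpha * g) ≤ 1 / 2)
    (hrate : 1536 * (S.eta * n * lam) ≤ 1) (ht : t ≤ S.T) (r : Fin S.m) {i : Fin S.N}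
    {j : Fin S.P} (hj : j ≠ S.sig i) : S.rho i j r t ≤ 10 * lam / n := by
  have hn := hB.norm_pos
  have hI : 0 ≤ I := (abs_nonneg _).trans (hB.abs_init_le r i j hj)
  have hc := hB.cross_nonneg
  have he0 : 0 ≤ I + S.N * S.P * (10 * lam / n * c) := by positivity
  have hehalf : I + S.N * S.P * (10 * lam / n * c) ≤ 1 / 2 := by
    have hmP : (1 : ℝ) ≤ S.m * S.P := by exact_mod_cast Nat.mul_pos S.hm S.hP
    exact (le_mul_of_one_le_left he0 (Real.one_le_rpow hmP (by norm_num))).trans hme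
  have htotal : 9 * lam / n + lam / (2 * n) + S.T * (1 / S.T * (lam / (2 * n))) = 10 * lam / n := by
    have : (S.T : ℝ) ≠ 0 := by exact_mod_cast hT.ne'
    field_simp
    norm_num
  let a : {q : Fin S.m × Fin S.N × Fin S.P // q.2.2 ≠ S.sig q.2.1} → ℕ → ℝ :=
    fun q => S.rho q.1.2.1 q.1.2.2 q.1.1
  rw [← htotal]
  refine le_add_mul_of_slow_above (a := a) (by positivity)
    (fun q => by simp only [a, rho]; positivity) ?_ t ht ⟨(r, i, j), hj⟩
  rintro s - hall ⟨⟨r, i, j⟩, hj⟩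
  rw [htotal] at hall
  have halign : S.NoiseAligned s _ := hB.noiseAligned hdyn fun r i j hj => hall ⟨(r, i, j), hj⟩
  have hrho := hall ⟨(r, i, j), hj⟩
  refine ⟨(halign.rho_succ_le hB hlam he0 hehalf hrate hj hrho).trans ?_,
    halign.rho_succ_le_of_large hB hdyn hd hT hlam hlamT he0 hehalf hme hms hrate hj hrho⟩
  gcongr
  exact mul_le_of_le_one_left (by positivity) (psi_le_one _)

end Bootstrap

section Scales

variable (S) in
/-- The logarithmic factor `log (T N m P / δ)` of Condition 4.1. -/
def logScale : ℝ := Real.log ((S.T : ℝ) * S.N * S.m * S.P / S.delta)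

variable (S) in
/-- The bound (P2) on the inner products of distinct noise patches. -/
def crossScale : ℝ :=
  2 * S.sigman ^ 2 * √((S.d : ℝ) * Real.log ((16 : ℝ) * S.N ^ 2 * S.P ^ 2 / S.delta))

variable (S) in
/-- The bound (P6) on the inner products of initial filters and noise patches. -/
def initScale : ℝ :=
  2 * S.sigma0 * S.sigman * √((S.d : ℝ) * Real.log ((16 : ℝ) * S.N * S.m * S.P / S.delta))

variable (S) in
/-- The bound (P5) on the signal coordinates of the initial filters. -/
def signalScale : ℝ := S.sigma0 * √(2 * Real.log ((16 : ℝ) * S.m / S.delta))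

variable (S) in
/-- The part of Condition (H) that controls the noise coefficients, with cleared denominators. The
exponent `2 / 3` of `m` and `P` in the two initialization constraints is relaxed to `1 / 3`. -/
structure NoiseCond (C : ℝ) : Prop where
  horizon : 16 ≤ S.T
  dimension : C * S.m ^ 2 * S.P ^ 2 * S.N ^ 2 * S.logScale ^ 4 ≤ S.d
  init_noise : C * (S.sigma0 * (((S.m : ℝ) * S.P) ^ ((1 : ℝ) / 3) * S.sigman * √S.d) *
    S.logScale) ≤ 1
  init_signal : C * (S.sigma0 * (S.alpha * (S.m : ℝ) ^ ((1 : ℝ) / 3)) * S.logScale) ≤ 1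
  rate : C * (S.eta * (S.sigman ^ 2 * S.d) * S.logScale) ≤ 1
  patches : S.P ≤ C

lemma crossScale_nonneg : 0 ≤ S.crossScale := by unfold crossScale; positivity

lemma EventE.noiseBounds (hE : S.EventE) :
    S.NoiseBounds (S.sigman ^ 2 * S.d) S.crossScale S.initScale S.signalScale := by
  obtain ⟨hnorm, hcross, -, -, hsignal, hinit, -, -⟩ := hE
  refine ⟨?_, crossScale_nonneg, fun i j hj => (hnorm i j hj).1, fun i j hj => ?_,
    hcross, hinit, fun r => ?_⟩
  · have := S.hsigman
    have : (0 : ℝ) < S.d := by exact_mod_cast S.hd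
    positivity
  · rw [← mul_assoc]
    exact (hnorm i j hj).2
  · rw [wsig, ← dot_e1 S.hd (S.w 0 r)]
    exact hsignal r

lemma one_le_N : (1 : ℝ) ≤ S.N := by exact_mod_cast S.hN

lemma one_le_m : (1 : ℝ) ≤ S.m := by exact_mod_cast S.hm

lemma one_le_P : (1 : ℝ) ≤ S.P := by exact_mod_cast S.hP

lemma one_le_d : (1 : ℝ) ≤ S.d := by exact_mod_cast S.hd

end Scales

section CondH

variable {C : ℝ}

lemma CondH.pos (hH : S.CondH C) : 0 < C := zero_lt_one.trans_le hH.1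

lemma CondH.T_pos (hH : S.CondH C) : (0 : ℝ) < S.T := by
  have := hH.pos
  obtain ⟨-, hhor, -⟩ := hH
  have := S.heta
  have := S.hsigma0
  have := S.hsigman
  have := S.one_le_N
  have := S.one_le_d
  exact lt_of_lt_of_le (by positivity) hhor

lemma CondH.half_le_logScale (hH : S.CondH C) : 1 / 2 ≤ S.logScale := by
  have hT : (1 : ℝ) ≤ S.T := by exact_mod_cast hH.T_pos
  obtain ⟨-, -, -, -, -, -, -, -, -, -, hP, -⟩ := hH
  have hP : (2 : ℝ) ≤ S.P := by exact_mod_cast hP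
  have hN := S.one_le_N
  have hm := S.one_le_m
  have hlog : Real.log 2 ≤ S.logScale := by
    refine Real.log_le_log two_pos ?_
    rw [le_div_iff₀ S.hdelta0]
    calc 2 * S.delta ≤ 2 * 1 := by gcongr; exact S.hdelta1.le
      _ = 1 * 1 * 1 * 2 := by norm_num
      _ ≤ S.T * S.N * S.m * S.P := by gcongr
  linarith [Real.log_two_gt_d9]

lemma CondH.rate (hH : S.CondH C) :
    C * (S.eta * (S.sigman ^ 2 * S.d) * S.logScale) ≤ 1 := by
  have := S.hsigman
  have := S.one_le_d
  have hlog := hH.half_le_logScale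
  have hC := hH.pos
  obtain ⟨-, -, -, -, -, hη, -⟩ := hH
  exact mul_le_one_of_le_inv_mul_div hC (by positivity) (by linarith) hη
    ((min_le_left _ _).trans (min_le_right _ _))

lemma CondH.logScale_le (hH : S.CondH C) :
    S.logScale ≤ Real.log ((S.T : ℝ) * S.d * S.N * S.m * S.P / S.delta) := by
  have := hH.T_pos
  have := S.one_le_N
  have := S.one_le_m
  have := S.one_le_P
  have := S.hdelta0
  refine Real.log_le_log (by positivity) ?_
  gcongr
  exact le_mul_of_one_le_right hH.T_pos.le S.one_le_d

lemma CondH.init_noise (hH : S.CondH C) :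
    C * (S.sigma0 * (((S.m : ℝ) * S.P) ^ ((1 : ℝ) / 3) * S.sigman * √S.d) * S.logScale) ≤ 1 := by
  have hm := S.one_le_m
  have hP := S.one_le_P
  have hd := S.one_le_d
  have hσn := S.hsigman
  have hσ0 := S.hsigma0
  have hC := hH.pos
  have hhalf := hH.half_le_logScale
  have hlog := hH.logScale_le
  obtain ⟨-, -, -, -, hinit, -⟩ := hH
  have hpaper := mul_le_one_of_le_inv_mul_div hC (by positivity) (by linarith) hinit
    ((min_le_left _ _).trans (min_le_left _ _))
  refine le_trans ?_ hpaper
  rw [Real.mul_rpow (by positivity) (by positivity)]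
  gcongr <;> norm_num

lemma CondH.init_signal (hH : S.CondH C) :
    C * (S.sigma0 * (S.alpha * (S.m : ℝ) ^ ((1 : ℝ) / 3)) * S.logScale) ≤ 1 := by
  have hm := S.one_le_m
  have hα := S.halpha
  have hσ0 := S.hsigma0
  have hC := hH.pos
  have hhalf := hH.half_le_logScale
  have hlog := hH.logScale_le
  obtain ⟨-, -, -, -, hinit, -⟩ := hH
  have hpaper := mul_le_one_of_le_inv_mul_div hC (by positivity) (by linarith) hinit
    ((min_le_left _ _).trans (min_le_right _ _))
  refine le_trans ?_ hpaper
  gcongr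
  norm_num

lemma CondH.pow_three_le (hH : S.CondH C) : C ^ 3 ≤ 4 * S.T := by
  have hC := hH.pos
  have hη := S.heta
  have hσn := S.hsigman
  have hσ0 := S.hsigma0
  have hd := S.one_le_d
  have hhalf := hH.half_le_logScale
  have hrate : C * (S.eta * (S.sigman ^ 2 * S.d)) ≤ 2 := by
    have : C * (S.eta * (S.sigman ^ 2 * S.d) * (1 / 2)) ≤
        C * (S.eta * (S.sigman ^ 2 * S.d) * S.logScale) := by gcongr
    linarith [hH.rate]
  have hinit : C * (S.sigma0 * (S.sigman * √S.d)) ≤ 2 := by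
    have hmP : (1 : ℝ) ≤ (S.m * S.P) ^ ((1 : ℝ) / 3) :=
      Real.one_le_rpow (by exact_mod_cast Nat.mul_pos S.hm S.hP) (by norm_num)
    have : C * (S.sigma0 * (1 * S.sigman * √S.d) * (1 / 2)) ≤
        C * (S.sigma0 * (((S.m : ℝ) * S.P) ^ ((1 : ℝ) / 3) * S.sigman * √S.d) * S.logScale) := by
      gcongr
    linarith [hH.init_noise]
  obtain ⟨-, hhor, -⟩ := hH
  rw [div_le_iff₀ (by positivity)] at hhor
  calc C ^ 3 = C ^ 2 * (C * 1) := by ring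
    _ ≤ C ^ 2 * (C * S.N) := by gcongr; exact S.one_le_N
    _ ≤ C ^ 2 * (S.T * (S.eta * S.sigma0 * S.sigman ^ 3 * (S.d * √S.d))) := by gcongr
    _ = C * (S.eta * (S.sigman ^ 2 * S.d)) * (C * (S.sigma0 * (S.sigman * √S.d))) * S.T := by ring
    _ ≤ 2 * 2 * S.T := by gcongr
    _ = 4 * S.T := by norm_num

lemma CondH.noiseCond (hH : S.CondH C) (hC : 4 ≤ C) : S.NoiseCond C where
  horizon := by
    have hT : (4 : ℝ) ^ 3 ≤ 4 * S.T := le_trans (by gcongr) hH.pow_three_le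
    have : (16 : ℝ) ≤ S.T := by linarith
    exact_mod_cast this
  dimension := hH.2.2.1
  init_noise := hH.init_noise
  init_signal := hH.init_signal
  rate := hH.rate
  patches := by
    obtain ⟨-, -, -, -, -, -, -, -, -, -, -, hP⟩ := hH
    exact hP

end CondH

section NoiseCond

variable {C : ℝ}

lemma NoiseCond.T_ge (hH : S.NoiseCond C) : (16 : ℝ) ≤ S.T := by exact_mod_cast hH.horizon

lemma NoiseCond.one_le_log_T (hH : S.NoiseCond C) : 1 ≤ Real.log S.T := by
  have hT := hH.T_ge
  rw [Real.le_log_iff_exp_le (by linarith)]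
  linarith [Real.exp_one_lt_d9]

lemma log_div_delta_le_logScale {a : ℝ} (ha : 0 < a) (h : a ≤ (S.T : ℝ) * S.N * S.m * S.P) :
    Real.log (a / S.delta) ≤ S.logScale := by
  have := S.hdelta0
  exact Real.log_le_log (by positivity) (by gcongr)

lemma NoiseCond.log_T_le_logScale (hH : S.NoiseCond C) : Real.log S.T ≤ S.logScale := by
  have hT : (0 : ℝ) < S.T := by linarith [hH.T_ge]
  have hN := S.one_le_N
  have hm := S.one_le_m
  have hP := S.one_le_P
  have hδ := S.hdelta0
  calc Real.log S.T ≤ Real.log (S.T / S.delta) :=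
        Real.log_le_log hT (le_div_self hT.le hδ S.hdelta1.le)
    _ ≤ S.logScale := log_div_delta_le_logScale hT <| by
        calc (S.T : ℝ) = S.T * 1 * 1 * 1 := by ring
          _ ≤ S.T * S.N * S.m * S.P := by gcongr

lemma NoiseCond.one_le_logScale (hH : S.NoiseCond C) : 1 ≤ S.logScale :=
  hH.one_le_log_T.trans hH.log_T_le_logScale

lemma NoiseCond.one_le_log_T_rpow (hH : S.NoiseCond C) : 1 ≤ Real.log S.T ^ ((1 : ℝ) / 3) :=
  Real.one_le_rpow hH.one_le_log_T (by norm_num)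

lemma NoiseCond.log_T_rpow_le (hH : S.NoiseCond C) :
    Real.log S.T ^ ((1 : ℝ) / 3) ≤ S.logScale :=
  (Real.rpow_le_self_of_one_le hH.one_le_log_T (by norm_num)).trans hH.log_T_le_logScale

lemma NoiseCond.sqrt_log_init_le (hH : S.NoiseCond C) :
    √(Real.log ((16 : ℝ) * S.N * S.m * S.P / S.delta)) ≤ S.logScale := by
  have := S.one_le_N
  have := S.one_le_m
  have := S.one_le_P
  refine sqrt_le_of_one_le_of_le hH.one_le_logScale (log_div_delta_le_logScale (by positivity) ?_)
  gcongr
  exact hH.T_ge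

lemma NoiseCond.sqrt_log_signal_le (hH : S.NoiseCond C) :
    √(2 * Real.log ((16 : ℝ) * S.m / S.delta)) ≤ 2 * S.logScale := by
  have hN := S.one_le_N
  have hm := S.one_le_m
  have hP := S.one_le_P
  refine sqrt_le_of_one_le_of_le (by linarith [hH.one_le_logScale]) ?_
  gcongr
  refine log_div_delta_le_logScale (by positivity) ?_
  calc (16 : ℝ) * S.m = 16 * 1 * S.m * 1 := by ring
    _ ≤ S.T * S.N * S.m * S.P := by gcongr; exact hH.T_ge

lemma NoiseCond.sqrt_log_cross_le (hH : S.NoiseCond C) :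
    √(Real.log ((16 : ℝ) * S.N ^ 2 * S.P ^ 2 / S.delta)) ≤ 2 * S.logScale := by
  have hN := S.one_le_N
  have hm := S.one_le_m
  have hP := S.one_le_P
  have hδ := S.hdelta0
  refine sqrt_le_of_one_le_of_le (by linarith [hH.one_le_logScale]) ?_
  have hdouble : 2 * S.logScale =
      Real.log ((S.T * S.N * S.m * S.P) ^ 2 / S.delta ^ 2) := by
    rw [← div_pow, Real.log_pow, Nat.cast_two, logScale]
  rw [hdouble]
  refine Real.log_le_log (by positivity) ?_
  calc (16 : ℝ) * S.N ^ 2 * S.P ^ 2 / S.delta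
      = (4 * S.N * 1 * S.P) ^ 2 / S.delta := by ring
    _ ≤ (S.T * S.N * S.m * S.P) ^ 2 / S.delta ^ 2 := by
      gcongr
      · linarith [hH.T_ge]
      · exact pow_le_of_le_one hδ.le S.hdelta1.le two_ne_zero

lemma NoiseCond.le_sqrt_d (hH : S.NoiseCond C) (hC : 0 ≤ C) :
    √C * (S.m * S.P * S.N * S.logScale ^ 2) ≤ √S.d := by
  refine Real.le_sqrt_of_sq_le (le_trans (le_of_eq ?_) hH.dimension)
  rw [mul_pow, Real.sq_sqrt hC]
  ring

lemma NoiseCond.two_le_d (hH : S.NoiseCond C) (hC : 2 ≤ C) : 2 ≤ S.d := by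
  have : (2 : ℝ) ≤ S.d := by
    calc (2 : ℝ) = 2 * 1 ^ 2 * 1 ^ 2 * 1 ^ 2 * 1 ^ 4 := by norm_num
      _ ≤ C * S.m ^ 2 * S.P ^ 2 * S.N ^ 2 * S.logScale ^ 4 := by
        gcongr
        exacts [S.one_le_m, S.one_le_P, S.one_le_N, hH.one_le_logScale]
      _ ≤ S.d := hH.dimension
  exact_mod_cast this

lemma NoiseCond.rpow_mul_initScale_le (hH : S.NoiseCond C) (hC : 0 < C) :
    ((S.m : ℝ) * S.P) ^ ((1 : ℝ) / 3) * S.initScale ≤ 2 / C := by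
  have := S.hsigma0
  have := S.hsigman
  rw [le_div_iff₀ hC, initScale, Real.sqrt_mul (Nat.cast_nonneg _)]
  calc ((S.m : ℝ) * S.P) ^ ((1 : ℝ) / 3) * (2 * S.sigma0 * S.sigman * (√S.d *
        √(Real.log ((16 : ℝ) * S.N * S.m * S.P / S.delta)))) * C
      ≤ ((S.m : ℝ) * S.P) ^ ((1 : ℝ) / 3) *
          (2 * S.sigma0 * S.sigman * (√S.d * S.logScale)) * C := by
        gcongr
        exact hH.sqrt_log_init_le
    _ = 2 * (C * (S.sigma0 * (((S.m : ℝ) * S.P) ^ ((1 : ℝ) / 3) * S.sigman * √S.d) *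
        S.logScale)) := by ring
    _ ≤ 2 := by linarith [hH.init_noise]

lemma NoiseCond.rpow_mul_signalScale_le (hH : S.NoiseCond C) (hC : 0 < C) :
    (S.m : ℝ) ^ ((1 : ℝ) / 3) * (S.alpha * S.signalScale) ≤ 2 / C := by
  have := S.hsigma0
  have := S.halpha
  rw [le_div_iff₀ hC, signalScale]
  calc (S.m : ℝ) ^ ((1 : ℝ) / 3) * (S.alpha * (S.sigma0 *
        √(2 * Real.log ((16 : ℝ) * S.m / S.delta)))) * C
      ≤ (S.m : ℝ) ^ ((1 : ℝ) / 3) * (S.alpha * (S.sigma0 * (2 * S.logScale))) * C := by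
        gcongr
        exact hH.sqrt_log_signal_le
    _ = 2 * (C * (S.sigma0 * (S.alpha * (S.m : ℝ) ^ ((1 : ℝ) / 3)) * S.logScale)) := by ring
    _ ≤ 2 := by linarith [hH.init_signal]

lemma NoiseCond.mul_crossScale_le (hH : S.NoiseCond C) (hC : 0 < C) :
    S.N * S.P * (10 * Real.log S.T ^ ((1 : ℝ) / 3) / (S.sigman ^ 2 * S.d) * S.crossScale) ≤
      40 / (√C * S.m) := by
  have hσ := S.hsigman
  have hN := S.one_le_N
  have hm := S.one_le_m
  have hP := S.one_le_P
  have hd := S.one_le_d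
  have hlog := hH.one_le_logScale
  have hsqrt : √(S.d : ℝ) * √(S.d : ℝ) = S.d := Real.mul_self_sqrt (by linarith)
  have hcross : S.crossScale ≤ 2 * S.sigman ^ 2 * (√S.d * (2 * S.logScale)) := by
    rw [crossScale, Real.sqrt_mul (by linarith)]
    gcongr
    exact hH.sqrt_log_cross_le
  calc S.N * S.P * (10 * Real.log S.T ^ ((1 : ℝ) / 3) / (S.sigman ^ 2 * S.d) * S.crossScale)
      ≤ S.N * S.P * (10 * S.logScale / (S.sigman ^ 2 * S.d) *
          (2 * S.sigman ^ 2 * (√S.d * (2 * S.logScale)))) := by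
        have := crossScale_nonneg (S := S)
        gcongr
        exact hH.log_T_rpow_le
    _ = 40 * (S.N * S.P * S.logScale ^ 2) / √S.d := by
        field_simp
        linear_combination 40 * hsqrt
    _ ≤ 40 * (S.N * S.P * S.logScale ^ 2) / (√C * (S.m * S.P * S.N * S.logScale ^ 2)) := by
        gcongr
        exact hH.le_sqrt_d hC.le
    _ = 40 / (√C * S.m) := by field_simp

lemma NoiseCond.rpow_mul_div_sqrt_le (hH : S.NoiseCond C) (hC : 10 ^ 12 ≤ C) :
    ((S.m : ℝ) * S.P) ^ ((1 : ℝ) / 3) * (40 / (√C * S.m)) ≤ 2 / 5 := by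
  have hC0 : 0 < C := by linarith
  have hm := S.one_le_m
  have hroot : (10 : ℝ) ^ 6 ≤ √C := Real.le_sqrt_of_sq_le (by linarith)
  have : 0 < √C := by linarith
  refine le_of_pow_le_pow_left₀ three_ne_zero (by norm_num) ?_
  rw [mul_pow, rpow_one_third_pow_three (by positivity)]
  calc S.m * S.P * (40 / (√C * S.m)) ^ 3
      ≤ S.m * √C ^ 2 * (40 / (√C * S.m)) ^ 3 := by
        rw [Real.sq_sqrt hC0.le]
        gcongr
        exact hH.patches
    _ = 40 ^ 3 / (√C * S.m ^ 2) := by field_simp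
    _ ≤ 40 ^ 3 / (10 ^ 6 * 1 ^ 2) := by gcongr
    _ = (2 / 5) ^ 3 := by norm_num

lemma NoiseCond.rate_le (hH : S.NoiseCond C) (hC : 1536 ≤ C) :
    1536 * (S.eta * (S.sigman ^ 2 * S.d) * Real.log S.T ^ ((1 : ℝ) / 3)) ≤ 1 := by
  have := S.heta
  have := hH.log_T_rpow_le
  have := hH.one_le_logScale
  calc 1536 * (S.eta * (S.sigman ^ 2 * S.d) * Real.log S.T ^ ((1 : ℝ) / 3))
      ≤ C * (S.eta * (S.sigman ^ 2 * S.d) * S.logScale) := by gcongr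
    _ ≤ 1 := hH.rate

end NoiseCond

end Setting

theorem stmt8_general {S : Setting} {t : ℕ} {C : ℝ} (hC : 10 ^ 12 ≤ C) (hdyn : S.ATDyn)
    (hB : S.NoiseBounds (S.sigman ^ 2 * S.d) S.crossScale S.initScale S.signalScale)
    (hH : S.NoiseCond C) (ht : t ≤ S.T) (r : Fin S.m) {i : Fin S.N} {j : Fin S.P}
    (hj : j ≠ S.sig i) :
    S.rho i j r t ≤ 10 * Real.log S.T ^ ((1 : ℝ) / 3) / (S.sigman ^ 2 * S.d) := by
  have hC0 : 0 < C := by linarith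
  have hsmall : 2 / C ≤ 1 / 10 := by
    rw [div_le_iff₀ hC0]
    linarith
  have hcross := mul_le_mul_of_nonneg_left (hH.mul_crossScale_le hC0)
    (by positivity : 0 ≤ ((S.m : ℝ) * S.P) ^ ((1 : ℝ) / 3))
  refine hB.rho_le hdyn (hH.two_le_d (by linarith)) (by linarith [hH.horizon]) hH.one_le_log_T_rpow
    (rpow_one_third_pow_three (by linarith [hH.one_le_log_T])) ?_ ?_
    (hH.rate_le (by linarith)) ht r hj
  · rw [mul_add]
    linarith [hH.rpow_mul_initScale_le hC0, hH.rpow_mul_div_sqrt_le hC]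
  · linarith [hH.rpow_mul_signalScale_le hC0]

/-- Uniform noise coefficient bound. On the event `E`, under
Condition (H), all noise coefficients satisfy `ρ_{i,j,r}^{(t)} ≤ 10 (log T)^{1/3}/(σ_n² d)`
for all `t ≤ T`. -/
theorem stmt8 :
    ∃ C : ℝ, 0 < C ∧
      ∀ S : Setting, S.ATDyn → S.EventE → S.CondH C → (S.SU.Nonempty → S.SparseRegime C) →
        ∀ t, t ≤ S.T → ∀ (r : Fin S.m) (i : Fin S.N) (j : Fin S.P), j ≠ S.sig i →
          S.rho i j r t ≤ 10 * Real.log S.T ^ ((1 : ℝ) / 3) / (S.sigman ^ 2 * S.d) :=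
  ⟨10 ^ 12, by norm_num, fun _ hdyn hE hH _ _ ht r _ _ hj =>
    stmt8_general le_rfl hdyn hE.noiseBounds (hH.noiseCond (by norm_num)) ht r hj⟩

end AD

end
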